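/- For every language L ⊆ Σ*, the Kleene star of L is contained in the iterated n-ary literal shuffle closure: L* ⊆ L^{⧢₂,*}. -/

import Mathlib

/-!
A word of `L∗` is a concatenation `u₁ ⋯ uₙ` with all `uᵢ ∈ L`. Take `kᵢ = |u₁ ⋯ uᵢ₋₁|`, which is
admissible because `|u₁ ⋯ uᵢ| ≤ n * N`. The padded words then form a staircase: each column of the
array holds at most one letter, and reading the columns from left to right gives `u₁ ⋯ uₙ`.

The array is built up from its last row. `transpose_cons` describes the effect on the columns of
putting a row on top (`consRow`). If the first `k + |u|` columns contain only dollars, then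
prepending the row `$^k u $^r` prepends `u` to the erased interleaving (`reduceOption_consRow_pad`)
and leaves the first `k` columns blank (`BlankUpTo.consRow`); `staircase` iterates this.
-/

/-!
Common definitions.

Words over an alphabet `β` are modelled as `List β`.  The alphabet
`Σ ∪ {$}` is modelled as `Option β`, where `none` plays the role of the
dollar sign `$` and `some x` the role of a letter `x ∈ Σ`.  The erasing
homomorphism `h` (with `h($) = ε`, `h(x) = x`) is `List.reduceOption`.
-/

/-- Perfect interleaving `I(v₁, …, vₙ)` of equal-length words, read column-wise. -/
def interleave {β : Type*} (vs : List (List β)) : List β :=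
  vs.transpose.flatten

/-- `$^k u $^r`, the two-sided dollar padding of the word `u`. -/
def dollarPad {β : Type*} (k : ℕ) (u : List β) (r : ℕ) : List (Option β) :=
  List.replicate k none ++ u.map some ++ List.replicate r none

/-- The `n`-ary initial literal shuffle `⧢₁ⁿ(u₁, …, uₙ)`:
pad each word with a fresh symbol (`none`) to the maximal length `N`,
interleave, and erase the fresh symbols. -/
def shuffle1 {β : Type*} {n : ℕ} (us : Fin n → List β) : List β :=
  (interleave (List.ofFn fun i =>
    (us i).map some ++
      List.replicate ((Finset.univ.sup fun j => (us j).length) - (us i).length)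
        (none : Option β))).reduceOption

/-- The `n`-ary literal shuffle `⧢₂ⁿ(u₁, …, uₙ)`:
all erased interleavings of paddings `$^k uᵢ $^{r-k}` with `r = n·N - |uᵢ|`. -/
def shuffle2 {β : Type*} {n : ℕ} (us : Fin n → List β) : Set (List β) :=
  { w | ∃ k : Fin n → ℕ,
      (∀ i, k i ≤ n * (Finset.univ.sup fun j => (us j).length) - (us i).length) ∧
      w = (interleave (List.ofFn fun i =>
        dollarPad (k i) (us i)
          (n * (Finset.univ.sup fun j => (us j).length) - (us i).length - k i))).reduceOption }

/-- Extension of `⧢₁ⁿ` to languages. -/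
def shuffle1L {β : Type*} {n : ℕ} (Ls : Fin n → Set (List β)) : Set (List β) :=
  { w | ∃ us : Fin n → List β, (∀ i, us i ∈ Ls i) ∧ w = shuffle1 us }

/-- Extension of `⧢₂ⁿ` to languages. -/
def shuffle2L {β : Type*} {n : ℕ} (Ls : Fin n → Set (List β)) : Set (List β) :=
  { w | ∃ us : Fin n → List β, (∀ i, us i ∈ Ls i) ∧ w ∈ shuffle2 us }

/-- Iterated version `L^{⧢₁,*} = {ε} ∪ ⋃_{n ≥ 1} ⧢₁ⁿ(L, …, L)`. -/
def itShuffle1 {β : Type*} (L : Set (List β)) : Set (List β) :=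
  {([] : List β)} ∪ ⋃ (n : ℕ) (_ : 1 ≤ n), shuffle1L (fun _ : Fin n => L)

/-- Iterated version `L^{⧢₂,*} = {ε} ∪ ⋃_{n ≥ 1} ⧢₂ⁿ(L, …, L)`. -/
def itShuffle2 {β : Type*} (L : Set (List β)) : Set (List β) :=
  {([] : List β)} ∪ ⋃ (n : ℕ) (_ : 1 ≤ n), shuffle2L (fun _ : Fin n => L)

/-- `IsShuffle u v w` : `w` is an interleaving of `u` and `v`
(ordinary shuffle of words). -/
inductive IsShuffle {β : Type*} : List β → List β → List β → Prop
  | nil : IsShuffle [] [] []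
  | left {a : β} {u v w : List β} : IsShuffle u v w → IsShuffle (a :: u) v (a :: w)
  | right {a : β} {u v w : List β} : IsShuffle u v w → IsShuffle u (a :: v) (a :: w)

/-- Ordinary shuffle of languages `U ⧢ V`. -/
def shuffleL {β : Type*} (U V : Set (List β)) : Set (List β) :=
  { w | ∃ u ∈ U, ∃ v ∈ V, IsShuffle u v w }

/-- `n`-fold ordinary shuffle `L₁ ⧢ ⋯ ⧢ Lₙ` (iterated binary shuffle;
`{ε}` is the neutral element). -/
def shuffleN {β : Type*} {n : ℕ} (Ls : Fin n → Set (List β)) : Set (List β) :=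
  (List.ofFn Ls).foldr shuffleL {([] : List β)}

/-- Iterated ordinary shuffle closure `L^{⧢,*}`. -/
def itShuffleO {β : Type*} (L : Set (List β)) : Set (List β) :=
  {([] : List β)} ∪ ⋃ (n : ℕ) (_ : 1 ≤ n), shuffleN (fun _ : Fin n => L)

/-- Bérard's binary initial literal shuffle of languages. -/
def berardShuffle1 {β : Type*} (U V : Set (List β)) : Set (List β) :=
  { w | (∃ x y v, x ++ y ∈ U ∧ v ∈ V ∧ x.length = v.length ∧ w = interleave [x, v] ++ y) ∨
        (∃ u x y, u ∈ U ∧ x ++ y ∈ V ∧ x.length = u.length ∧ w = interleave [u, x] ++ y) }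

/-- A three-letter alphabet `Σ = {a, b, c}`. -/
inductive ABC : Type
  | a | b | c
deriving DecidableEq

open scoped Computability

/-- The array of columns obtained from the columns `cs` by putting the row `l` on top. If `l` is
longer than `cs`, new one-letter columns are created. -/
def consRow {β : Type*} : List β → List (List β) → List (List β)
  | [], cs => cs
  | a :: l, [] => [a] :: consRow l []
  | a :: l, c :: cs => (a :: c) :: consRow l cs

lemma consRow_nil_right {β : Type*} (l : List β) : consRow l [] = l.map fun a => [a] := by
  induction l with
  | nil => rfl
  | cons a l ih => simp [consRow, ih]

/-- The stateful pass in `List.transpose.go`, followed by the letters left over, is `consRow`. -/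
lemma mapM_pop {β : Type*} (cs : List (List β)) (l : List β) :
    (cs.mapM (m := StateM (List β)) List.transpose.pop l).1 ++
        (cs.mapM (m := StateM (List β)) List.transpose.pop l).2.map (fun a => [a]) =
      consRow l cs := by
  induction cs generalizing l with
  | nil => simp [consRow_nil_right, pure, StateT.pure]
  | cons c cs ih =>
    cases l with
    | nil =>
      have := ih []
      simp only [consRow] at this ⊢
      conv_rhs => rw [← this]
      simp [List.mapM_cons, bind, StateT.bind, pure, StateT.pure, List.transpose.pop]
      rfl
    | cons a l =>
      have := ih l
      rw [consRow, ← this]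
      simp [List.mapM_cons, bind, StateT.bind, pure, StateT.pure, List.transpose.pop]
      rfl

lemma toList_foldl_push {β : Type*} (l : List β) (acc : Array (List β)) :
    (l.foldl (fun arr a => arr.push [a]) acc).toList = acc.toList ++ l.map fun a => [a] := by
  simp

lemma toList_go {β : Type*} (l : List β) (acc : Array (List β)) :
    (List.transpose.go l acc).toList = consRow l acc.toList := by
  rw [← mapM_pop]
  unfold List.transpose.go
  rw [← Array.toList_mapM]
  exact toList_foldl_push _ _

lemma transpose_cons {β : Type*} (l : List β) (ls : List (List β)) :
    (l :: ls).transpose = consRow l ls.transpose := by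
  simp [List.transpose, toList_go]

/-- The first `m` columns of `cs` (or all of them, if there are fewer) contain only dollars. -/
def BlankUpTo {α : Type*} (m : ℕ) (cs : List (List (Option α))) : Prop :=
  ∀ c ∈ cs.take m, c.reduceOption = []

lemma blankUpTo_cons {α : Type*} {m : ℕ} {c : List (Option α)} {cs : List (List (Option α))} :
    BlankUpTo (m + 1) (c :: cs) ↔ c.reduceOption = [] ∧ BlankUpTo m cs := by
  simp [BlankUpTo]

lemma blankUpTo_nil {α : Type*} {m : ℕ} : BlankUpTo m ([] : List (List (Option α))) := by
  simp [BlankUpTo]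

lemma BlankUpTo.consRow {α : Type*} {k : ℕ} {cs : List (List (Option α))} (h : BlankUpTo k cs)
    (l : List (Option α)) : BlankUpTo k (consRow (List.replicate k none ++ l) cs) := by
  induction k generalizing cs with
  | zero => simp [BlankUpTo]
  | succ k ih =>
    cases cs with
    | nil =>
      simp only [List.replicate_succ, List.cons_append, _root_.consRow, blankUpTo_cons]
      exact ⟨by simp [List.reduceOption], ih blankUpTo_nil⟩
    | cons c cs =>
      rw [blankUpTo_cons] at h
      simp only [List.replicate_succ, List.cons_append, _root_.consRow, blankUpTo_cons]
      exact ⟨by simpa using h.1, ih h.2⟩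

lemma reduceOption_consRow_replicate {α : Type*} (r : ℕ) (cs : List (List (Option α))) :
    (consRow (List.replicate r none) cs).flatten.reduceOption = cs.flatten.reduceOption := by
  induction r generalizing cs with
  | zero => rfl
  | succ r ih =>
    cases cs with
    | nil => simpa [List.replicate_succ, consRow] using ih []
    | cons c cs => simp [List.replicate_succ, consRow, List.reduceOption_append, ih]

lemma reduceOption_consRow_map {α : Type*} (u : List α) (r : ℕ) (cs : List (List (Option α)))
    (h : BlankUpTo u.length cs) :
    (consRow (u.map some ++ List.replicate r none) cs).flatten.reduceOption =
      u ++ cs.flatten.reduceOption := by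
  induction u generalizing cs with
  | nil => simpa using reduceOption_consRow_replicate r cs
  | cons a u ih =>
    cases cs with
    | nil => simpa [consRow] using ih [] blankUpTo_nil
    | cons c cs =>
      rw [List.length_cons, blankUpTo_cons] at h
      simp [consRow, List.reduceOption_append, ih cs h.2, h.1]

lemma reduceOption_consRow_pad {α : Type*} (k : ℕ) (u : List α) (r : ℕ)
    (cs : List (List (Option α))) (h : BlankUpTo (k + u.length) cs) :
    (consRow (dollarPad k u r) cs).flatten.reduceOption = u ++ cs.flatten.reduceOption := by
  unfold dollarPad
  induction k generalizing cs with
  | zero => simpa using reduceOption_consRow_map u r cs (by simpa using h)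
  | succ k ih =>
    simp only [List.append_assoc] at ih ⊢
    cases cs with
    | nil => simpa [List.replicate_succ, consRow] using ih [] blankUpTo_nil
    | cons c cs =>
      rw [Nat.add_right_comm, blankUpTo_cons] at h
      simp [List.replicate_succ, consRow, List.reduceOption_append, ih cs h.2, h.1]

/-- The staircase arrangement, with the whole staircase shifted by `off` columns for the sake of
the induction. The numbers `r i` of trailing dollars are irrelevant. -/
lemma staircase {α : Type*} (us : List (List α)) (off : ℕ) (r : Fin us.length → ℕ) :
    let cs := (List.ofFn fun i : Fin us.length =>
      dollarPad (off + (us.take i).flatten.length) (us.get i) (r i)).transpose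
    BlankUpTo off cs ∧ cs.flatten.reduceOption = us.flatten := by
  induction us generalizing off with
  | nil => exact ⟨blankUpTo_nil, rfl⟩
  | cons u us ih =>
    obtain ⟨h₁, h₂⟩ := ih (off + u.length) (fun i => r i.succ)
    have key : (List.ofFn fun i : Fin (u :: us).length =>
          dollarPad (off + ((u :: us).take i).flatten.length) ((u :: us).get i) (r i)) =
        dollarPad off u (r 0) :: List.ofFn fun i : Fin us.length =>
          dollarPad (off + u.length + (us.take i).flatten.length) (us.get i) (r i.succ) := by
      simp only [List.length_cons, List.ofFn_succ]
      simp [add_assoc]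
    simp only [key, transpose_cons]
    constructor
    · rw [dollarPad, List.append_assoc]
      refine BlankUpTo.consRow (fun c hc => h₁ c ?_) _
      exact (List.take_subset_take_left _ (Nat.le_add_right _ _)) hc
    · rw [reduceOption_consRow_pad _ _ _ _ h₁, h₂, List.flatten_cons]

lemma length_flatten_le {α : Type*} (us : List (List α)) :
    us.flatten.length ≤ us.length * Finset.univ.sup fun j => (us.get j).length := by
  rw [List.length_flatten]
  refine (List.sum_le_card_nsmul _ (Finset.univ.sup fun j => (us.get j).length) ?_).trans
    (by simp)
  intro x hx
  obtain ⟨u, hu, rfl⟩ := List.mem_map.1 hx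
  obtain ⟨j, rfl⟩ := List.get_of_mem hu
  exact Finset.le_sup (f := fun j => (us.get j).length) (Finset.mem_univ j)

/-- For every language `L`, the Kleene star of `L` is
contained in the iterated `n`-ary literal shuffle closure: `L* ⊆ L^{⧢₂,*}`. -/
theorem stmt10 {α : Type*} (L : Language α) :
    ∀ w : List α, w ∈ L∗ → w ∈ itShuffle2 (L : Set (List α)) := by
  intro w hw
  obtain ⟨us, rfl, hus⟩ := Language.mem_kstar.1 hw
  by_cases hne : us = []
  · subst hne
    exact Or.inl rfl
  right
  simp only [Set.mem_iUnion]
  refine ⟨us.length, List.length_pos_iff.2 hne, us.get, fun i => hus _ (us.get_mem i),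
    fun i => (us.take i).flatten.length, fun i => ?_, ?_⟩
  · -- `kᵢ + |uᵢ|` is the length of the prefix `u₁ ⋯ uᵢ` of the whole word
    have h₁ : (us.take i).flatten.length + (us.get i).length ≤ us.flatten.length := by
      conv_rhs => rw [← List.take_append_drop i us, List.drop_eq_getElem_cons i.2]
      simp only [List.flatten_append, List.flatten_cons, List.length_append, List.get_eq_getElem]
      omega
    have h₂ := length_flatten_le us
    dsimp only
    omega
  · have h := (staircase us 0 fun i => us.length *
      (Finset.univ.sup fun j => (us.get j).length) - (us.get i).length -
        (us.take i).flatten.length).2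
    simp only [zero_add] at h
    exact h.symm
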